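/- (Grigorchuk–Zuk) The semigroup generated by the Basilica generators a and b is free non-abelian: the monoid homomorphism φ : FreeMonoid Bool →* Equiv.Perm (List Bool) determined by φ(FreeMonoid.of false) = a and φ(FreeMonoid.of true) = b is injective; that is, distinct positive words in a and b (including the empty word) represent distinct permutations. -/

import Mathlib

/-!
The letters `a` and `b` are encoded by `false` and `true`, and a positive word `W` acts on the tree
with its last letter acting first. Write `W = (P W, Q W)` up to the swap `st W` of the two subtrees
(the parity of the number of `b`s in `W`). Since `a = (1, b)` and `b = (1, a)` times the swap, the
sections `P W` and `Q W` are again positive words, and every letter of `W` contributes one letter to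
exactly one of them, so `|P W| + |Q W| = |W|`.

The first letter of `W` can be read off from the sections (`head_sections`): when `st W` is false
it is the opposite of the first letter of `Q W`, and when `st W` is true, `W` begins with `a` exactly
if `P W` begins with `b`. Suppose two words act equally. Equal first letters cancel, so they
may be assumed to have different first letters, or one of them to be empty. Their parities agree and
their sections act equally, so by induction on the total length the sections agree as words, which
contradicts the reading of the first letter. The relevant sections are strictly shorter, except
when comparing `a…` with the empty word; there `Q` begins with `b`, and the comparison
of `b…` with the empty word has already been excluded at that length.
-/

namespace Basilica

mutual
  /-- Underlying map of the Basilica generator `a`. -/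
  def aF : List Bool → List Bool
    | [] => []
    | false :: w => false :: w
    | true :: w => true :: bF w
  /-- Underlying map of the Basilica generator `b`. -/
  def bF : List Bool → List Bool
    | [] => []
    | false :: w => true :: w
    | true :: w => false :: aF w
end

mutual
  /-- Inverse of `aF`. -/
  def aI : List Bool → List Bool
    | [] => []
    | false :: w => false :: w
    | true :: w => true :: bI w
  /-- Inverse of `bF`. -/
  def bI : List Bool → List Bool
    | [] => []
    | false :: w => true :: aI w
    | true :: w => false :: w
end

theorem basilica_inv : ∀ w : List Bool,
    aI (aF w) = w ∧ bI (bF w) = w ∧ aF (aI w) = w ∧ bF (bI w) = w := by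
  intro w
  induction w with
  | nil => simp [aF, bF, aI, bI]
  | cons x w ih =>
    cases x <;>
      simp [aF, bF, aI, bI, ih.1, ih.2.1, ih.2.2.1, ih.2.2.2]

/-- The Basilica generator `a` as a permutation of the binary tree `List Bool`:
`a [] = []`, `a (false :: w) = false :: w`, `a (true :: w) = true :: b w`. -/
def a : Equiv.Perm (List Bool) :=
  ⟨aF, aI, fun w => (basilica_inv w).1, fun w => (basilica_inv w).2.2.1⟩

/-- The Basilica generator `b` as a permutation of the binary tree `List Bool`:
`b [] = []`, `b (false :: w) = true :: w`, `b (true :: w) = false :: a w`. -/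
def b : Equiv.Perm (List Bool) :=
  ⟨bF, bI, fun w => (basilica_inv w).2.1, fun w => (basilica_inv w).2.2.2⟩

/-- Underlying map of the pair `(g, h)` acting on the two subtrees. -/
def pairF (g h : List Bool → List Bool) : List Bool → List Bool
  | [] => []
  | false :: w => false :: g w
  | true :: w => true :: h w

/-- The permutation of `List Bool` acting as `g` on the subtree below `false`
and as `h` on the subtree below `true`, fixing the root. -/
def pair (g h : Equiv.Perm (List Bool)) : Equiv.Perm (List Bool) :=
  ⟨pairF g h, pairF g.symm h.symm,
    fun w => by cases w with
      | nil => rfl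
      | cons x w => cases x <;> simp [pairF],
    fun w => by cases w with
      | nil => rfl
      | cons x w => cases x <;> simp [pairF]⟩

/-- The Basilica group: the subgroup of `Equiv.Perm (List Bool)` generated by `a` and `b`. -/
def B : Subgroup (Equiv.Perm (List Bool)) := Subgroup.closure {a, b}

end Basilica

namespace Basilica

/-- Action on the tree of a positive word, with `false` standing for `a` and `true` for `b`;
the last letter acts first. -/
def act : List Bool → List Bool → List Bool
  | [], w => w
  | false :: W, w => aF (act W w)
  | true :: W, w => bF (act W w)

/-- Parity of the number of `b`s, i.e. the image of the first-level vertex `false`. -/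
def st : List Bool → Bool
  | [] => false
  | false :: W => st W
  | true :: W => !st W

/-- Section of a positive word at the vertex `false`, as a positive word. -/
def P : List Bool → List Bool
  | [] => []
  | l :: W => if st W then (!l) :: P W else P W

/-- Section of a positive word at the vertex `true`, as a positive word. -/
def Q : List Bool → List Bool
  | [] => []
  | l :: W => if st W then Q W else (!l) :: Q W

theorem act_false_cons (W w : List Bool) : act W (false :: w) = st W :: act (P W) w := by
  induction W with
  | nil => rfl
  | cons l W ih => cases l <;> cases h : st W <;> simp [act, st, P, ih, h, aF, bF]

theorem act_true_cons (W w : List Bool) : act W (true :: w) = (!st W) :: act (Q W) w := by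
  induction W with
  | nil => rfl
  | cons l W ih => cases l <;> cases h : st W <;> simp [act, st, Q, ih, h, aF, bF]

theorem length_sections (W : List Bool) : (P W).length + (Q W).length = W.length := by
  induction W with
  | nil => rfl
  | cons l W ih => cases h : st W <;> simp [P, Q, h] <;> omega

/-- If a word swaps the subtrees, the last transition produced the letter `a` at the front of `Q`,
and later `a`s of the word only affect `P`; symmetrically otherwise, except that there may
have been no transition, in which case `P` is empty. -/
theorem head_sections (W : List Bool) :
    (st W = true → (Q W).head? = some false) ∧ (st W = false → (P W).head? ≠ some true) := by
  induction W with
  | nil => simp [st, P]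
  | cons l W ih => cases l <;> cases h : st W <;> simp_all [st, P, Q]

theorem sections_of_act_eq {U V : List Bool} (h : act U = act V) :
    st U = st V ∧ act (P U) = act (P V) ∧ act (Q U) = act (Q V) := by
  have h0 : ∀ w, st U = st V ∧ act (P U) w = act (P V) w := fun w => by
    simpa [act_false_cons] using congrFun h (false :: w)
  have h1 : ∀ w, st U = st V ∧ act (Q U) w = act (Q V) w := fun w => by
    simpa [act_true_cons] using congrFun h (true :: w)
  exact ⟨(h0 []).1, funext fun w => (h0 w).2, funext fun w => (h1 w).2⟩

theorem act_cons_cancel {l : Bool} {U V : List Bool} (h : act (l :: U) = act (l :: V)) :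
    act U = act V := by
  funext w
  have hw := congrFun h w
  cases l
  · exact a.injective hw
  · exact b.injective hw

theorem length_pos_of_head {W : List Bool} {x : Bool} (h : W.head? = some x) : 0 < W.length := by
  cases W <;> simp_all

/-- The faithfulness statement for pairs of words of total length at most `n`. -/
def FaithfulUpTo (n : ℕ) : Prop :=
  ∀ U V : List Bool, U.length + V.length ≤ n → act U = act V → U = V

theorem act_b_cons_ne_nil {n : ℕ} (ih : FaithfulUpTo n) (U : List Bool)
    (hU : U.length ≤ n) : act (true :: U) ≠ act [] := by
  intro h
  obtain ⟨hs, -, hQ⟩ := sections_of_act_eq h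
  have hst : st U = true := by simpa [st] using hs
  have hhead := (head_sections U).1 hst
  have hlen := length_sections U
  have := ih (Q (true :: U)) (Q []) (by simp [Q, hst]; omega) hQ
  simp [Q, hst] at this
  simp [this] at hhead

theorem act_cons_ne_nil {n : ℕ} (ih : FaithfulUpTo n) (l : Bool) (U : List Bool)
    (hU : U.length ≤ n) : act (l :: U) ≠ act [] := by
  cases l
  · intro h
    obtain ⟨hs, -, hQ⟩ := sections_of_act_eq h
    have hst : st U = false := by simpa [st] using hs
    have hlen := length_sections U
    -- `a U` has section `b (Q U)` at `true`, whose length need not have dropped.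
    refine act_b_cons_ne_nil ih (Q U) (by omega) ?_
    simpa [Q, hst] using hQ
  · exact act_b_cons_ne_nil ih U hU

theorem act_a_cons_ne_b_cons {n : ℕ} (ih : FaithfulUpTo n) (U V : List Bool)
    (hUV : U.length + V.length + 1 ≤ n) : act (false :: U) ≠ act (true :: V) := by
  intro h
  obtain ⟨hs, hP, hQ⟩ := sections_of_act_eq h
  have hlU := length_sections U
  have hlV := length_sections V
  cases hst : st U
  · have hst' : st V = true := by simpa [st, hst] using hs
    have hhead := (head_sections V).1 hst'
    have := ih _ _ (by simp [Q, hst, hst']; omega) hQ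
    simp [Q, hst, hst'] at this
    simp [← this] at hhead
  · have hst' : st V = false := by simpa [st, hst] using hs
    have hhead := (head_sections V).2 hst'
    have hpos := length_pos_of_head ((head_sections U).1 hst)
    have := ih _ _ (by simp [P, hst, hst']; omega) hP
    simp [P, hst, hst'] at this
    simp [← this] at hhead

theorem faithfulUpTo (n : ℕ) : FaithfulUpTo n := by
  induction n with
  | zero =>
    intro U V hlen _
    have hU : U = [] := List.length_eq_zero_iff.1 (by omega)
    have hV : V = [] := List.length_eq_zero_iff.1 (by omega)
    rw [hU, hV]
  | succ n ih =>
    intro U V hlen h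
    match U, V with
    | [], [] => rfl
    | l :: U, [] => exact absurd h (act_cons_ne_nil ih l U (by simpa using hlen))
    | [], l :: V => exact absurd h.symm (act_cons_ne_nil ih l V (by simpa using hlen))
    | l :: U, m :: V =>
      simp only [List.length_cons] at hlen
      match l, m with
      | false, true => exact absurd h (act_a_cons_ne_b_cons ih U V (by omega))
      | true, false => exact absurd h.symm (act_a_cons_ne_b_cons ih V U (by omega))
      | false, false => rw [ih U V (by omega) (act_cons_cancel h)]
      | true, true => rw [ih U V (by omega) (act_cons_cancel h)]

end Basilica

open Basilica in
/-- (Grigorchuk–Zuk) The semigroup generated by the Basilica generators `a` and `b`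
is free non-abelian: the monoid homomorphism `FreeMonoid Bool →* Equiv.Perm (List Bool)`
sending `FreeMonoid.of false` to `a` and `FreeMonoid.of true` to `b` is injective. -/
theorem basilica_free_semigroup (φ : FreeMonoid Bool →* Equiv.Perm (List Bool))
    (hfa : φ (FreeMonoid.of false) = a) (hfb : φ (FreeMonoid.of true) = b) :
    Function.Injective φ := by
  have key : ∀ (x : FreeMonoid Bool) (w : List Bool), φ x w = act x.toList w := by
    intro x w
    induction x using FreeMonoid.recOn with
    | one => simp [act]
    | of_mul l x ih =>
      rw [map_mul, Equiv.Perm.mul_apply, ih, FreeMonoid.toList_of_mul]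
      cases l
      · rw [hfa]; rfl
      · rw [hfb]; rfl
  intro x y hxy
  apply FreeMonoid.toList.injective
  refine faithfulUpTo _ _ _ le_rfl ?_
  funext w
  rw [← key, ← key, hxy]
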